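/- For any field F and any n ∈ ℕ, the polynomial ring F[x₁, …, xₙ] is projective free, i.e., every finitely generated projective module over F[x₁, …, xₙ] is free (the Quillen–Suslin theorem). -/

import Mathlib

/-- A commutative unital ring is projective free if every finitely generated
projective module over it is free. -/
def IsProjectiveFree (R : Type*) [CommRing R] : Prop :=
  ∀ (M : Type) [AddCommGroup M] [Module R M],
    Module.Finite R M → Module.Projective R M → Module.Free R M

namespace QS

/-- An idempotent matrix whose image is free, in matrix terms. -/
def Std {R : Type*} [CommRing R] {n : ℕ} (e : Matrix (Fin n) (Fin n) R) : Prop :=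
  ∃ (r : ℕ) (x : Matrix (Fin n) (Fin r) R) (y : Matrix (Fin r) (Fin n) R), x * y = e ∧ y * x = 1

/-- Every idempotent matrix has free image. -/
def PF (R : Type*) [CommRing R] : Prop :=
  ∀ (n : ℕ) (e : Matrix (Fin n) (Fin n) R), e * e = e → Std e

lemma pf_field (K : Type*) [Field K] : PF K := by
  intro n e he
  set p := Matrix.toLin' e with hp
  have hpp : p ∘ₗ p = p := by rw [hp, ← Matrix.toLin'_mul, he]
  let b := Module.finBasis K (LinearMap.range p)
  refine ⟨_, LinearMap.toMatrix' ((LinearMap.range p).subtype ∘ₗ b.equivFun.symm.toLinearMap),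
    LinearMap.toMatrix' (b.equivFun.toLinearMap ∘ₗ p.rangeRestrict), ?_, ?_⟩
  · rw [← LinearMap.toMatrix'_comp]
    conv_rhs => rw [← LinearMap.toMatrix'_toLin' e]
    congr 1
    apply LinearMap.ext
    intro v
    simp only [LinearMap.comp_apply, LinearEquiv.coe_coe, LinearEquiv.symm_apply_apply]
    rfl
  · rw [← LinearMap.toMatrix'_comp, ← LinearMap.toMatrix'_id]
    congr 1
    apply LinearMap.ext
    intro v
    have : p.rangeRestrict (b.equivFun.symm v : LinearMap.range p) = b.equivFun.symm v := by
      obtain ⟨w, hw⟩ := (b.equivFun.symm v).2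
      apply Subtype.ext
      rw [← hw]
      exact LinearMap.congr_fun hpp w
    simp only [LinearMap.comp_apply, LinearEquiv.coe_coe, Submodule.subtype_apply,
      LinearMap.id_apply]
    rw [this, LinearEquiv.apply_symm_apply]

lemma PF.isProjectiveFree {R : Type*} [CommRing R] (h : PF R) : IsProjectiveFree R := by
  intro M _ _ _ _
  obtain ⟨n, f, hf⟩ := Module.Finite.exists_fin' R M
  obtain ⟨s, hs⟩ := Module.projective_lifting_property f LinearMap.id hf
  have hs' : ∀ m, f (s m) = m := fun m => LinearMap.congr_fun hs m
  obtain ⟨r, x, y, hxy, hyx⟩ := h n (LinearMap.toMatrix' (s ∘ₗ f)) (by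
    rw [← LinearMap.toMatrix'_comp]; congr 1; ext; simp [hs'])
  have h1 : ∀ v, x.mulVec (y.mulVec v) = s (f v) := fun v => by
    rw [Matrix.mulVec_mulVec, hxy, LinearMap.toMatrix'_mulVec]; rfl
  have h2 : ∀ v, y.mulVec (x.mulVec v) = v := fun v => by
    rw [Matrix.mulVec_mulVec, hyx, Matrix.one_mulVec]
  refine Module.Free.of_equiv (LinearEquiv.ofLinearMap (f ∘ₗ x.mulVecLin) (y.mulVecLin ∘ₗ s) ?_ ?_)
  · ext m; simp [h1, hs']
  · apply LinearMap.ext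
    intro v
    have : s (f (x.mulVec v)) = x.mulVec v := by rw [← h1, h2]
    simp [this, h2]

lemma PF.of_ringEquiv {R S : Type*} [CommRing R] [CommRing S] (φ : R ≃+* S) (h : PF S) : PF R := by
  intro n e he
  obtain ⟨r, x, y, hxy, hyx⟩ := h n (e.map φ) (by rw [← Matrix.map_mul, he])
  refine ⟨r, x.map φ.symm, y.map φ.symm, ?_, ?_⟩
  · rw [← Matrix.map_mul, hxy, Matrix.map_map]; ext; simp
  · rw [← Matrix.map_mul, hyx, Matrix.map_one _ (map_zero _) (map_one _)]

/-- Over a domain, an idempotent matrix is generically free. -/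
lemma generic {R : Type*} [CommRing R] [IsDomain R] {n : ℕ} (e : Matrix (Fin n) (Fin n) R)
    (he : e * e = e) : ∃ (r : ℕ) (α : Matrix (Fin n) (Fin r) R) (β : Matrix (Fin r) (Fin n) R)
      (c : R), c ≠ 0 ∧ α * β = c • e ∧ β * α = c • 1 ∧ β * e = β := by
  let K := FractionRing R
  have hinj : Function.Injective (algebraMap R K) := IsFractionRing.injective R K
  obtain ⟨r, x, y, hxy, hyx⟩ := pf_field K n (e.map (algebraMap R K)) (by
    rw [← Matrix.map_mul, he])
  obtain ⟨a, ha⟩ := IsLocalization.exist_integer_multiples_of_finite (nonZeroDivisors R)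
    (fun ij : Fin n × Fin r => x ij.1 ij.2)
  obtain ⟨b, hb⟩ := IsLocalization.exist_integer_multiples_of_finite (nonZeroDivisors R)
    (fun ij : Fin r × Fin n => y ij.1 ij.2)
  choose α hα using ha
  choose β hβ using hb
  have hα' : (Matrix.of fun i j => α (i, j)).map (algebraMap R K) = (a : R) • x := by
    ext i j; simp [hα]
  have hβ' : (Matrix.of fun i j => β (i, j)).map (algebraMap R K) = (b : R) • y := by
    ext i j; simp [hβ]
  have minj : ∀ {p q : ℕ} {M N : Matrix (Fin p) (Fin q) R},
      M.map (algebraMap R K) = N.map (algebraMap R K) → M = N := fun h =>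
    Matrix.map_injective hinj h
  have hye : y * e.map (algebraMap R K) = y := by rw [← hxy, ← Matrix.mul_assoc, hyx, Matrix.one_mul]
  refine ⟨r, Matrix.of fun i j => α (i, j), Matrix.of fun i j => β (i, j), a * b, ?_, ?_, ?_, ?_⟩
  · exact mul_ne_zero (nonZeroDivisors.coe_ne_zero a) (nonZeroDivisors.coe_ne_zero b)
  · apply minj
    rw [Matrix.map_mul, hα', hβ', Matrix.smul_mul, Matrix.mul_smul, hxy]
    ext i j
    simp only [Matrix.smul_apply, Matrix.map_apply]
    simp only [Algebra.smul_def, map_mul, mul_assoc, Algebra.algebraMap_self, RingHom.id_apply]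
  · apply minj
    rw [Matrix.map_mul, hα', hβ', Matrix.smul_mul, Matrix.mul_smul, hyx]
    ext i j
    simp only [Matrix.smul_apply, Matrix.map_apply]
    simp only [Algebra.smul_def, map_mul, Algebra.algebraMap_self, RingHom.id_apply]
    by_cases h : i = j
    · subst h; simp [mul_comm]
    · simp [h]
  · apply minj
    rw [Matrix.map_mul, hβ', Matrix.smul_mul, hye]

end QS

namespace QS
section equivT
open Polynomial MvPolynomial Ideal Nat RingHom List
variable {k : Type*} [Field k] {n : ℕ} (f : MvPolynomial (Fin (n + 1)) k)
variable (v w : Fin (n + 1) →₀ ℕ)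




variable {f v} in
lemma lt_up (vlt : ∀ i, v i < (2 + f.totalDegree)) : ∀ l ∈ ofFn v, l < (2 + f.totalDegree) := by
  grind


/-- We construct an algebra map `T1 f c` which maps `X_i` into `X_i + c • X_0 ^ r_i` when `i ≠ 0`
and `X_0` to `X_0`. -/
noncomputable abbrev T1 (c : k) :
    MvPolynomial (Fin (n + 1)) k →ₐ[k] MvPolynomial (Fin (n + 1)) k :=
  aeval fun i ↦ if i = 0 then X 0 else X i + c • X 0 ^ (2 + f.totalDegree) ^ (i : Fin (n + 1)).1

lemma t1_comp_t1_neg (c : k) : (T1 f c).comp (T1 f (-c)) = AlgHom.id _ _ := by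
  rw [comp_aeval, ← MvPolynomial.aeval_X_left]
  ext i v
  cases i using Fin.cases <;> simp

/-- `T1 f 1` leads to an algebra equiv `T f`. -/
noncomputable abbrev T := AlgEquiv.ofAlgHom (T1 f 1) (T1 f (-1))
  (t1_comp_t1_neg f 1) (by simpa using t1_comp_t1_neg f (-1))

lemma sum_r_mul_ne (vlt : ∀ i, v i < (2 + f.totalDegree)) (wlt : ∀ i, w i < (2 + f.totalDegree)) (ne : v ≠ w) :
    ∑ x : Fin (n + 1), (2 + f.totalDegree) ^ (x : Fin (n + 1)).1 * v x ≠ ∑ x : Fin (n + 1), (2 + f.totalDegree) ^ (x : Fin (n + 1)).1 * w x := by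
  intro h
  refine ne <| Finsupp.ext <| congrFun <| ofFn_inj.mp ?_
  apply ofDigits_inj_of_len_eq (Nat.lt_add_right f.totalDegree one_lt_two)
    (by simp) (lt_up vlt) (lt_up wlt)
  simpa only [ofDigits_eq_sum_mapIdx, mapIdx_eq_ofFn, get_ofFn, length_ofFn,
    Fin.val_cast, mul_comm, sum_ofFn] using! h

lemma degreeOf_zero_t {a : k} (ha : a ≠ 0) : ((T f) (monomial v a)).degreeOf 0 =
    ∑ i : Fin (n + 1), ((2 + f.totalDegree) ^ (i : Fin (n + 1)).1) * v i := by
  rw [← natDegree_finSuccEquiv, monomial_eq, Finsupp.prod_pow v fun a ↦ X a]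
  simp only [Fin.prod_univ_succ, Fin.sum_univ_succ, map_mul, map_prod, map_pow,
    AlgEquiv.ofAlgHom_apply, MvPolynomial.aeval_C, MvPolynomial.aeval_X, if_pos, Fin.succ_ne_zero,
    ite_false, one_smul, map_add, finSuccEquiv_X_zero, finSuccEquiv_X_succ, algebraMap_eq]
  have h (i : Fin n) :
      (Polynomial.C (X (R := k) i) + Polynomial.X ^ (2 + f.totalDegree) ^ (i.succ : Fin (n + 1)).1) ^ v i.succ ≠ 0 :=
    pow_ne_zero (v i.succ) (leadingCoeff_ne_zero.mp <| by simp [add_comm, leadingCoeff_X_pow_add_C])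
  rw [natDegree_mul (by simp [ha]) (mul_ne_zero (by simp) (Finset.prod_ne_zero_iff.mpr
    (fun i _ ↦ h i))), natDegree_mul (by simp) (Finset.prod_ne_zero_iff.mpr (fun i _ ↦ h i)),
    natDegree_prod _ _ (fun i _ ↦ h i), natDegree_finSuccEquiv, degreeOf_C]
  simpa only [natDegree_pow, zero_add, natDegree_X, mul_one, Fin.val_zero, pow_zero, one_mul,
    add_right_inj] using Finset.sum_congr rfl (fun i _ ↦ by
    rw [add_comm (Polynomial.C _), natDegree_X_pow_add_C, mul_comm])

/-- `T` maps different monomials of `f` to polynomials with different degrees in `X_0`. -/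
lemma degreeOf_t_ne_of_ne (hv : v ∈ f.support) (hw : w ∈ f.support) (ne : v ≠ w) :
    (T f <| monomial v <| coeff v f).degreeOf 0 ≠
    (T f <| monomial w <| coeff w f).degreeOf 0 := by
  rw [degreeOf_zero_t _ _ <| mem_support_iff.mp hv, degreeOf_zero_t _ _ <| mem_support_iff.mp hw]
  refine sum_r_mul_ne f v w (fun i ↦ ?_) (fun i ↦ ?_) ne <;>
  exact lt_of_le_of_lt ((monomial_le_degreeOf i ‹_›).trans (degreeOf_le_totalDegree f i))
    (by lia)

lemma leadingCoeff_finSuccEquiv_t :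
    (finSuccEquiv k n ((T f) ((monomial v) (coeff v f)))).leadingCoeff =
    algebraMap k _ (coeff v f) := by
  rw [monomial_eq, Finsupp.prod_fintype]
  · simp only [map_mul, map_prod, leadingCoeff_mul, leadingCoeff_prod]
    rw [AlgEquiv.ofAlgHom_apply, algHom_C, algebraMap_eq, finSuccEquiv_apply,
      eval₂Hom_C, coe_comp]
    simp only [AlgEquiv.ofAlgHom_apply, Function.comp_apply, leadingCoeff_C, map_pow,
      leadingCoeff_pow, algebraMap_eq]
    have : ∀ j, ((finSuccEquiv k n) ((T1 f) 1 (X j))).leadingCoeff = 1 := fun j ↦ by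
      by_cases h : j = 0
      · simp [h, finSuccEquiv_apply]
      · simp only [aeval_eq_bind₁, bind₁_X_right, if_neg h, one_smul, map_add, map_pow]
        obtain ⟨i, rfl⟩ := Fin.exists_succ_eq.mpr h
        simp [finSuccEquiv_X_succ, finSuccEquiv_X_zero, add_comm]
    simp only [this, one_pow, Finset.prod_const_one, mul_one]
  exact fun i ↦ pow_zero _

/-- `T` maps `f` into some polynomial in `X_0` such that the leading coefficient is invertible. -/
lemma T_leadingcoeff_isUnit (fne : f ≠ 0) :
    IsUnit (finSuccEquiv k n (T f f)).leadingCoeff := by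
  obtain ⟨v, vin, vs⟩ := Finset.exists_max_image f.support
    (fun v ↦ (T f ((monomial v) (coeff v f))).degreeOf 0) (support_nonempty.mpr fne)
  set h := fun w ↦ (MvPolynomial.monomial w) (coeff w f)
  simp only [← natDegree_finSuccEquiv] at vs
  replace vs : ∀ x ∈ f.support \ {v}, (finSuccEquiv k n ((T f) (h x))).degree <
      (finSuccEquiv k n ((T f) (h v))).degree := by
    intro x hx
    obtain ⟨h1, h2⟩ := Finset.mem_sdiff.mp hx
    apply degree_lt_degree <| lt_of_le_of_ne (vs x h1) ?_
    simpa only [natDegree_finSuccEquiv]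
      using degreeOf_t_ne_of_ne f _ _ h1 vin <| ne_of_not_mem_cons h2
  have coeff : (finSuccEquiv k n ((T f) (h v + ∑ x ∈ f.support \ {v}, h x))).leadingCoeff =
      (finSuccEquiv k n ((T f) (h v))).leadingCoeff := by
    simp only [map_add, map_sum]
    rw [add_comm]
    apply leadingCoeff_add_of_degree_lt <| (lt_of_le_of_lt <| degree_sum_le _ _) ?_
    have h2 : h v ≠ 0 := by simpa [h] using mem_support_iff.mp vin
    replace h2 : (finSuccEquiv k n ((T f) (h v))) ≠ 0 := fun eq ↦ h2 <|
      by simpa only [map_eq_zero_iff _ (AlgEquiv.injective _)] using eq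
    exact (Finset.sup_lt_iff <| Ne.bot_lt (fun x ↦ h2 <| degree_eq_bot.mp x)).mpr vs
  nth_rw 2 [← f.support_sum_monomial_coeff]
  rw [Finset.sum_eq_add_sum_sdiff_singleton_of_mem vin h]
  rw [leadingCoeff_finSuccEquiv_t] at coeff
  simpa only [coeff, algebraMap_eq] using (mem_support_iff.mp vin).isUnit.map MvPolynomial.C

end equivT
end QS

namespace QS
section patch
open Polynomial

/-- Murray–von Neumann equivalence of matrices. -/
def MvN {R : Type*} [CommRing R] {n : ℕ} (e f : Matrix (Fin n) (Fin n) R) : Prop :=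
  ∃ x y : Matrix (Fin n) (Fin n) R, x * y = e ∧ y * x = f

lemma MvN.trans {R : Type*} [CommRing R] {n : ℕ} {e f g : Matrix (Fin n) (Fin n) R}
    (he : e * e = e) (hg : g * g = g) (h1 : MvN e f) (h2 : MvN f g) : MvN e g := by
  obtain ⟨x, y, hxy, hyx⟩ := h1
  obtain ⟨x', y', hxy', hyx'⟩ := h2
  refine ⟨x * x', y' * y, ?_, ?_⟩
  · calc x * x' * (y' * y) = x * (x' * y') * y := by simp only [mul_assoc]
      _ = (x * y) * (x * y) := by rw [hxy', ← hyx]; simp only [mul_assoc]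
      _ = e := by rw [hxy, he]
  · calc y' * y * (x * x') = y' * (y * x) * x' := by simp only [mul_assoc]
      _ = (y' * x') * (y' * x') := by rw [hyx, ← hxy']; simp only [mul_assoc]
      _ = g := by rw [hyx', hg]

lemma MvN.map {R S : Type*} [CommRing R] [CommRing S] {n : ℕ} {e f : Matrix (Fin n) (Fin n) R}
    (φ : R →+* S) (h : MvN e f) : MvN (e.map φ) (f.map φ) := by
  obtain ⟨x, y, hxy, hyx⟩ := h
  exact ⟨x.map φ, y.map φ, by rw [← Matrix.map_mul, hxy], by rw [← Matrix.map_mul, hyx]⟩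

/-- The Quillen ideal of an idempotent matrix. -/
def quillenIdeal {A : Type} [CommRing A] {n : ℕ} (e : Matrix (Fin n) (Fin n) A[X])
    (he : e * e = e) : Ideal A where
  carrier := {a | ∀ (B : Type) [CommRing B] [Algebra A B] (x y : B),
    MvN (e.map (aeval (R := A) (x + algebraMap A B a * y))) (e.map (aeval (R := A) x))}
  zero_mem' := by
    intro B _ _ x y
    have : (e.map (aeval (R := A) x)) * (e.map (aeval (R := A) x)) = e.map (aeval (R := A) x) := by
      rw [← Matrix.map_mul, he]
    exact ⟨_, _, by simpa using this, this⟩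
  add_mem' := by
    intro a b ha hb B _ _ x y
    have idem : ∀ z : B, (e.map (aeval (R := A) z)) * (e.map (aeval (R := A) z)) =
      e.map (aeval (R := A) z) := fun z => by rw [← Matrix.map_mul, he]
    have h1 := ha B x y
    have h2 := hb B (x + algebraMap A B a * y) y
    have := MvN.trans (idem _) (idem _) h2 h1
    convert this using 4
    rw [map_add]; ring
  smul_mem' := by
    intro c a ha B _ _ x y
    have := ha B x (algebraMap A B c * y)
    convert this using 4
    rw [smul_eq_mul, map_mul]; ring

/-- Clearing denominators after rescaling the outer variable. -/
lemma clear_denoms {A L : Type} [CommRing A] [CommRing L] [Algebra A L] (M : Submonoid A)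
    [IsLocalization M L] {ι : Type} [Finite ι] (p : ι → L[X][X])
    (h0 : ∀ i, (p i).coeff 0 ∈ Set.range (mapRingHom (algebraMap A L))) :
    ∃ s ∈ M, ∀ i, (p i).comp (C (C (algebraMap A L s)) * X) ∈
      Set.range (mapRingHom (mapRingHom (algebraMap A L))) := by
  classical
  cases nonempty_fintype ι
  obtain ⟨s, hs⟩ := IsLocalization.exist_integer_multiples M
    (Finset.univ.sigma fun i : ι => (p i).support.sigma fun n => ((p i).coeff n).support)
    (fun q => ((p q.1).coeff q.2.1).coeff q.2.2)
  have hs' : ∀ i n k, algebraMap A L s * ((p i).coeff n).coeff k ∈ Set.range (algebraMap A L) := by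
    intro i n k
    by_cases h : ((p i).coeff n).coeff k = 0
    · exact ⟨0, by simp [h]⟩
    · obtain ⟨a, ha⟩ := hs ⟨i, n, k⟩ (by
        simp only [Finset.mem_sigma, Finset.mem_univ, mem_support_iff, true_and]
        exact ⟨fun h' => h (by rw [h']; simp), h⟩)
      exact ⟨a, by rw [ha, Algebra.smul_def]⟩
  refine ⟨s, s.2, fun i => ?_⟩
  have key : (p i).comp (C (C (algebraMap A L s)) * X) ∈ lifts (mapRingHom (algebraMap A L)) := by
    rw [lifts_iff_coeff_lifts]
    intro n
    rw [comp_C_mul_X_coeff]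
    rcases n with _ | n
    · simpa using h0 i
    · have : (p i).coeff (n + 1) * C (algebraMap A L s) ^ (n + 1) ∈ lifts (algebraMap A L) := by
        rw [lifts_iff_coeff_lifts]
        intro k
        rw [← C_pow, coeff_mul_C]
        obtain ⟨a, ha⟩ := hs' i (n + 1) k
        refine ⟨a * s ^ n, ?_⟩
        rw [map_mul, ha, map_pow]; ring
      rw [mem_lifts] at this
      exact this
  rw [mem_lifts] at key
  exact key

lemma local_mem {A L : Type} [CommRing A] [CommRing L] [Algebra A L] (M : Submonoid A)
    [IsLocalization M L] (hinj : Function.Injective (algebraMap A L)) {n : ℕ}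
    (e : Matrix (Fin n) (Fin n) A[X]) (he : e * e = e)
    (hstd : ∃ (r : ℕ) (x : Matrix (Fin n) (Fin r) L[X]) (y : Matrix (Fin r) (Fin n) L[X]),
      x * y = e.map (mapRingHom (algebraMap A L)) ∧ y * x = 1) :
    ∃ s ∈ M, s ∈ quillenIdeal e he := by
  obtain ⟨r, x, y, hxy, hyx⟩ := hstd
  -- substitutions `t ↦ t + u` and `t ↦ t`
  let φ : L[X] →+* L[X][X] := (aeval (R := L) ((C X + X : L[X][X]))).toRingHom
  let ψ : L[X] →+* L[X][X] := C
  let ε : L[X][X] →+* L[X] := constantCoeff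
  have hεφ : ε.comp φ = RingHom.id _ := by
    ext a <;> simp [ε, φ, aeval_C]
  have hεψ : ε.comp ψ = RingHom.id _ := by
    ext a <;> simp [ε, ψ]
  let Φ := x.map φ * y.map ψ
  let Ψ := x.map ψ * y.map φ
  have m1 : y.map ψ * x.map ψ = 1 := by
    rw [← Matrix.map_mul, hyx, Matrix.map_one _ (map_zero _) (map_one _)]
  have m2 : y.map φ * x.map φ = 1 := by
    rw [← Matrix.map_mul, hyx, Matrix.map_one _ (map_zero _) (map_one _)]
  have hΦΨ : Φ * Ψ = (e.map (mapRingHom (algebraMap A L))).map φ := by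
    rw [← hxy, Matrix.map_mul]
    calc _ = x.map φ * (y.map ψ * x.map ψ) * y.map φ := by simp only [Φ, Ψ, Matrix.mul_assoc]
      _ = _ := by rw [m1, Matrix.mul_one]
  have hΨΦ : Ψ * Φ = (e.map (mapRingHom (algebraMap A L))).map ψ := by
    rw [← hxy, Matrix.map_mul]
    calc _ = x.map ψ * (y.map φ * x.map φ) * y.map ψ := by simp only [Φ, Ψ, Matrix.mul_assoc]
      _ = _ := by rw [m2, Matrix.mul_one]
  have hΦ0 : Φ.map ε = e.map (mapRingHom (algebraMap A L)) := by
    simp only [Φ]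
    rw [Matrix.map_mul, Matrix.map_map, Matrix.map_map, ← RingHom.coe_comp, ← RingHom.coe_comp,
      hεφ, hεψ, ← hxy]; rfl
  have hΨ0 : Ψ.map ε = e.map (mapRingHom (algebraMap A L)) := by
    simp only [Ψ]
    rw [Matrix.map_mul, Matrix.map_map, Matrix.map_map, ← RingHom.coe_comp, ← RingHom.coe_comp,
      hεφ, hεψ, ← hxy]; rfl
  obtain ⟨s, hs, hp⟩ := clear_denoms (L := L) M
    (fun q : (Fin n × Fin n) × Bool => if q.2 then Φ q.1.1 q.1.2 else Ψ q.1.1 q.1.2) (by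
      rintro ⟨⟨i, j⟩, b⟩
      cases b
      · exact ⟨e i j, (congrFun (congrFun hΨ0 i) j).symm⟩
      · exact ⟨e i j, (congrFun (congrFun hΦ0 i) j).symm⟩)
  refine ⟨s, hs, ?_⟩
  choose g hg using hp
  let J : A[X][X] →+* L[X][X] := mapRingHom (mapRingHom (algebraMap A L))
  have hJ : Function.Injective J := map_injective _ (map_injective _ hinj)
  let σ : L[X][X] →+* L[X][X] := compRingHom (C (C (algebraMap A L s)) * X)
  let P : Matrix (Fin n) (Fin n) A[X][X] := Matrix.of fun i j => g ((i, j), true)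
  let Q : Matrix (Fin n) (Fin n) A[X][X] := Matrix.of fun i j => g ((i, j), false)
  have hP : P.map J = Φ.map σ := by
    ext1 i j; simpa [P, J, σ] using hg ((i, j), true)
  have hQ : Q.map J = Ψ.map σ := by
    ext1 i j; simpa [Q, J, σ] using hg ((i, j), false)
  let φ' : A[X] →+* A[X][X] := (aeval (R := A) ((C X + C (C s) * X : A[X][X]))).toRingHom
  have c1 : (σ.comp φ).comp (mapRingHom (algebraMap A L)) = J.comp φ' := by
    ext a
    · simp [σ, φ, J, φ', aeval_C]
    · simp [σ, φ, J, φ', aeval_C]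
  have c2 : (σ.comp ψ).comp (mapRingHom (algebraMap A L)) = J.comp C := by
    ext a
    · simp [σ, ψ, J]
    · simp [σ, ψ, J]
  have hPQ : P * Q = e.map φ' := by
    apply Matrix.map_injective hJ
    beta_reduce
    rw [Matrix.map_mul, hP, hQ, ← Matrix.map_mul, hΦΨ]
    ext1 i j
    exact RingHom.congr_fun c1 (e i j)
  have hQP : Q * P = e.map C := by
    apply Matrix.map_injective hJ
    beta_reduce
    rw [Matrix.map_mul, hP, hQ, ← Matrix.map_mul, hΨΦ]
    ext1 i j
    exact RingHom.congr_fun c2 (e i j)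
  intro B _ _ b c
  let θ : A[X][X] →+* B := eval₂RingHom (aeval (R := A) b).toRingHom c
  have : MvN ((e.map φ').map θ) ((e.map C).map θ) := MvN.map θ ⟨P, Q, hPQ, hQP⟩
  have d1 : θ.comp φ' = (aeval (R := A) (b + algebraMap A B s * c)).toRingHom := by
    ext a
    · simp [θ, φ', aeval_C]
    · simp [θ, φ']
  have d2 : θ.comp C = (aeval (R := A) b).toRingHom := by
    ext a <;> simp [θ]
  rw [Matrix.map_map, Matrix.map_map, ← RingHom.coe_comp, ← RingHom.coe_comp, d1, d2] at this
  exact this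

lemma patch {A : Type} [CommRing A] [IsDomain A] {n : ℕ}
    (e : Matrix (Fin n) (Fin n) A[X]) (he : e * e = e)
    (hloc : ∀ (m : Ideal A) [m.IsMaximal],
      ∃ (r : ℕ) (x : Matrix (Fin n) (Fin r) (Localization.AtPrime m)[X])
        (y : Matrix (Fin r) (Fin n) (Localization.AtPrime m)[X]),
      x * y = e.map (mapRingHom (algebraMap A (Localization.AtPrime m))) ∧ y * x = 1) :
    MvN e ((e.map (evalRingHom 0)).map C) := by
  have htop : quillenIdeal e he = ⊤ := by
    by_contra hne
    obtain ⟨m, hm, hle⟩ := Ideal.exists_le_maximal _ hne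
    obtain ⟨s, hs, hs'⟩ := local_mem (L := Localization.AtPrime m) m.primeCompl
      (IsLocalization.injective _ m.primeCompl_le_nonZeroDivisors) e he (hloc m)
    exact hs (hle hs')
  have h1 : (1 : A) ∈ quillenIdeal e he := htop ▸ Submodule.mem_top
  have := h1 A[X] 0 X
  convert this using 1
  · ext1 i j; simp
  · ext1 i j
    simp [← coeff_zero_eq_aeval_zero', coeff_zero_eq_eval_zero]

end patch
end QS

namespace QS
section loc
open Polynomial

lemma selection {A : Type} [CommRing A] [IsLocalRing A] {r : ℕ}
    (Q : Submodule A[X] (Fin r → A[X]))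
    (hm : ∀ v : Fin r → A[X], (∀ i k, (v i).coeff k ∈ IsLocalRing.maximalIdeal A) → v ∈ Q)
    (c : A[X]) (hc : c.Monic) (hcQ : ∀ v : Fin r → A[X], c • v ∈ Q) :
    ∃ κ : Fin r → ℕ, (∀ v : Fin r → A[X], ∃ w ∈ Q, ∀ i, (v i - w i).degree < κ i) ∧
      (∀ v ∈ Q, (∀ i, (v i).degree < κ i) → ∀ i k, (v i).coeff k ∈ IsLocalRing.maximalIdeal A) := by
  classical
  let S : Fin r → ℕ → Prop := fun l d =>
    ∃ v ∈ Q, (v l).Monic ∧ (v l).natDegree = d ∧ ∀ i, l < i → v i = 0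
  have hS : ∀ l, ∃ d, S l d := fun l => by
    refine ⟨c.natDegree, c • Pi.single l 1, hcQ _, ?_, ?_, ?_⟩
    · simpa using hc
    · simp
    · intro i hi
      simp [Pi.single_eq_of_ne hi.ne']
  let κ : Fin r → ℕ := fun l => Nat.find (hS l)
  refine ⟨κ, ?_, ?_⟩
  · have key : ∀ j : ℕ, j ≤ r → ∀ v : Fin r → A[X], (∀ i : Fin r, j ≤ i → v i = 0) →
        ∃ w ∈ Q, ∀ i, (v i - w i).degree < κ i := by
      intro j
      induction j with
      | zero =>
        intro _ v hv
        refine ⟨0, Q.zero_mem, fun i => ?_⟩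
        rw [hv i (Nat.zero_le _)]
        simp
      | succ j ih =>
        intro hj v hv
        let l : Fin r := ⟨j, hj⟩
        obtain ⟨q, hqQ, hqm, hqd, hq0⟩ := Nat.find_spec (hS l)
        let v' := v - (v l /ₘ q l) • q
        have hv'l : v' l = v l %ₘ q l := by
          simp only [v', Pi.sub_apply, Pi.smul_apply, smul_eq_mul, modByMonic_eq_sub_mul_div]
          ring
        have hdl : (v' l).degree < κ l := by
          rw [hv'l]
          refine (degree_modByMonic_lt _ hqm).trans_le ?_
          rw [degree_eq_natDegree hqm.ne_zero, hqd]
        obtain ⟨w, hwQ, hw⟩ := ih (by omega) (Function.update v' l 0) (by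
          intro i hi
          by_cases hil : i = l
          · subst hil; simp
          · rw [Function.update_of_ne hil]
            have hli : l < i := by
              rw [Fin.lt_def]
              have : i.1 ≠ j := fun h => hil (Fin.ext h)
              change j < i.1
              omega
            have : v i = 0 := hv i (by rw [Fin.lt_def] at hli; exact hli)
            simp [v', this, hq0 i hli])
        refine ⟨w + (v l /ₘ q l) • q, Q.add_mem hwQ (Q.smul_mem _ hqQ), fun i => ?_⟩
        have hi := hw i
        have e1 : v i - (w + (v l /ₘ q l) • q) i = v' i - w i := by
          simp only [v', Pi.sub_apply, Pi.add_apply]; ring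
        rw [e1]
        by_cases hil : i = l
        · rw [hil] at hi ⊢
          rw [Function.update_self] at hi
          have : v' l - w l = v' l + (0 - w l) := by ring
          rw [this]
          exact (degree_add_le _ _).trans_lt (max_lt hdl hi)
        · rwa [Function.update_of_ne hil] at hi
    intro v
    exact key r le_rfl v (fun i hi => absurd i.2 (by omega))
  · intro v hv hdeg
    by_contra hbad
    push Not at hbad
    let T : Finset (Fin r) := Finset.univ.filter fun i => ∃ k, (v i).coeff k ∉ IsLocalRing.maximalIdeal A
    have hT : T.Nonempty := by
      obtain ⟨i, k, h⟩ := hbad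
      exact ⟨i, by simp only [T, Finset.mem_filter, Finset.mem_univ, true_and]; exact ⟨k, h⟩⟩
    let l := T.max' hT
    have hl : ∃ k, (v l).coeff k ∉ IsLocalRing.maximalIdeal A := by
      have := T.max'_mem hT
      simpa only [T, Finset.mem_filter, Finset.mem_univ, true_and] using this
    have hgt : ∀ i, l < i → ∀ k, (v i).coeff k ∈ IsLocalRing.maximalIdeal A := by
      intro i hi k
      by_contra h
      have : i ∈ T := by
        simp only [T, Finset.mem_filter, Finset.mem_univ, true_and]; exact ⟨k, h⟩
      exact absurd (T.le_max' i this) (not_le.mpr hi)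
    let U : Finset ℕ := (v l).support.filter fun k => (v l).coeff k ∉ IsLocalRing.maximalIdeal A
    have memU : ∀ k, (v l).coeff k ∉ IsLocalRing.maximalIdeal A → k ∈ U := by
      intro k hk
      simp only [U, Finset.mem_filter, mem_support_iff]
      exact ⟨fun h => hk (by rw [h]; exact Ideal.zero_mem _), hk⟩
    have hU : U.Nonempty := by
      obtain ⟨k, hk⟩ := hl
      exact ⟨k, memU k hk⟩
    let d := U.max' hU
    have hd : (v l).coeff d ∉ IsLocalRing.maximalIdeal A := by
      have := U.max'_mem hU
      simp only [U, Finset.mem_filter] at this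
      exact this.2
    have hdgt : ∀ k, d < k → (v l).coeff k ∈ IsLocalRing.maximalIdeal A := by
      intro k hk
      by_contra h
      exact absurd (U.le_max' k (memU k h)) (not_le.mpr hk)
    have hu : IsUnit ((v l).coeff d) := by simpa using hd
    obtain ⟨a, ha⟩ := hu.exists_left_inv
    let p : A[X] := ∑ k ∈ Finset.range (d + 1), monomial k ((v l).coeff k)
    have hp : ∀ k, p.coeff k = if k < d + 1 then (v l).coeff k else 0 := by
      intro k
      simp [p, coeff_monomial]
    let v' : Fin r → A[X] := fun i => if l < i then 0 else if i = l then p else v i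
    have hv' : v' ∈ Q := by
      have : v - v' ∈ Q := by
        apply hm
        intro i k
        simp only [Pi.sub_apply, v']
        split_ifs with h1 h2
        · simpa using hgt i h1 k
        · subst h2
          rw [coeff_sub, hp]
          split_ifs with h3
          · simp
          · simpa using hdgt k (by omega)
        · simp
      have h2 := Q.sub_mem hv this
      simpa using h2
    have hlt : d < κ l := by
      have h1 : (d : WithBot ℕ) ≤ (v l).degree := le_degree_of_ne_zero
        (fun h => hd (by rw [h]; exact Ideal.zero_mem _))
      exact_mod_cast h1.trans_lt (hdeg l)
    have hv'l : v' l = p := by simp [v']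
    refine Nat.find_min (hS l) hlt ⟨C a • v', Q.smul_mem _ hv', ?_, ?_, ?_⟩
    · rw [Pi.smul_apply, hv'l]
      refine monic_of_natDegree_le_of_coeff_eq_one d ?_ ?_
      · rw [natDegree_le_iff_coeff_eq_zero]
        intro N hN
        rw [smul_eq_mul, coeff_C_mul, hp, if_neg (by omega), mul_zero]
      · rw [smul_eq_mul, coeff_C_mul, hp, if_pos (by omega), ha]
    · rw [Pi.smul_apply, hv'l]
      refine natDegree_eq_of_le_of_coeff_ne_zero ?_ ?_
      · rw [natDegree_le_iff_coeff_eq_zero]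
        intro N hN
        rw [smul_eq_mul, coeff_C_mul, hp, if_neg (by omega), mul_zero]
      · rw [smul_eq_mul, coeff_C_mul, hp, if_pos (by omega), ha]
        exact one_ne_zero
    · intro i hi
      simp [v', hi]

lemma mem_smul_top {A : Type} [CommRing A] (I : Ideal A) {r : ℕ} (v : Fin r → A[X])
    (hv : ∀ i k, (v i).coeff k ∈ I) : v ∈ I • (⊤ : Submodule A (Fin r → A[X])) := by
  classical
  have : v = ∑ i, ∑ k ∈ (v i).support, (v i).coeff k • (Pi.single i (X ^ k) : Fin r → A[X]) := by
    conv_lhs => rw [← Finset.univ_sum_single v]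
    refine Finset.sum_congr rfl fun i _ => ?_
    conv_lhs => rw [(v i).as_sum_support_C_mul_X_pow]
    have := map_sum (LinearMap.single A (fun _ : Fin r => A[X]) i)
      (fun k => C ((v i).coeff k) * X ^ k) (v i).support
    simp only [LinearMap.coe_single] at this
    rw [this]
    refine Finset.sum_congr rfl fun k _ => ?_
    rw [← smul_eq_C_mul, Pi.single_smul]
  rw [this]
  exact Submodule.sum_mem _ fun i _ => Submodule.sum_mem _ fun k _ =>
    Submodule.smul_mem_smul (hv i k) Submodule.mem_top

lemma finite_quot {A : Type} [CommRing A] {r : ℕ} (κ : Fin r → ℕ)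
    (N : Submodule A (Fin r → A[X]))
    (h : ∀ v : Fin r → A[X], ∃ w ∈ N, ∀ i, (v i - w i).degree < κ i) :
    Module.Finite A ((Fin r → A[X]) ⧸ N) := by
  let f : ((i : Fin r) → degreeLT A (κ i)) →ₗ[A] (Fin r → A[X]) :=
    LinearMap.pi fun i => (degreeLT A (κ i)).subtype ∘ₗ LinearMap.proj i
  have : ∀ i, Module.Finite A (degreeLT A (κ i)) := fun i =>
    Module.Finite.equiv (degreeLTEquiv A (κ i)).symm
  refine Module.Finite.of_surjective (N.mkQ ∘ₗ f) ?_
  intro x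
  obtain ⟨v, rfl⟩ := N.mkQ_surjective x
  obtain ⟨w, hw, hd⟩ := h v
  refine ⟨fun i => ⟨v i - w i, mem_degreeLT.mpr (hd i)⟩, ?_⟩
  have : f (fun i => ⟨v i - w i, mem_degreeLT.mpr (hd i)⟩) = v - w := rfl
  rw [LinearMap.comp_apply, this, map_sub, sub_eq_self]
  simpa using hw

/-- Local Horrocks: a generating set of `P` with `r` elements. -/
lemma horrocks_gen {A : Type} [CommRing A] [IsLocalRing A] [IsNoetherianRing A] {r : ℕ}
    (P : Submodule A[X] (Fin r → A[X])) (c : A[X]) (hc : c.Monic)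
    (hcP : ∀ v : Fin r → A[X], c • v ∈ P)
    (hPm : ∀ v ∈ P, (∀ i k, (v i).coeff k ∈ IsLocalRing.maximalIdeal A) →
      v ∈ IsLocalRing.maximalIdeal A • P.restrictScalars A) :
    ∃ q : Fin r → (Fin r → A[X]), Submodule.span A[X] (Set.range q) = P := by
  classical
  let I := IsLocalRing.maximalIdeal A
  have hjac : I ≤ Ideal.jacobson ⊥ := IsLocalRing.maximalIdeal_le_jacobson _
  let Q : Submodule A[X] (Fin r → A[X]) := P ⊔ Submodule.pi Set.univ fun _ => I.map C
  obtain ⟨κ, h1, h2⟩ := selection Q (fun v hv => Submodule.mem_sup_right (by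
    rw [Submodule.mem_pi]
    intro i _
    exact Ideal.mem_map_C_iff.mpr (hv i))) c hc (fun v => Submodule.mem_sup_left (hcP v))
  let PA := P.restrictScalars A
  let W : Submodule A (Fin r → A[X]) := Submodule.pi Set.univ fun i => degreeLT A (κ i)
  have memW : ∀ w, w ∈ W ↔ ∀ i, (w i).degree < κ i := fun w => by
    simp [W, Submodule.mem_pi, mem_degreeLT]
  have fin1 : Module.Finite A ((Fin r → A[X]) ⧸ PA) := by
    refine finite_quot (fun _ => c.natDegree) PA fun v => ?_
    refine ⟨c • fun i => v i /ₘ c, hcP _, fun i => ?_⟩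
    have : v i - (c • fun i => v i /ₘ c) i = v i %ₘ c := by
      rw [modByMonic_eq_sub_mul_div]; rfl
    rw [this]
    refine (degree_modByMonic_lt _ hc).trans_le ?_
    rw [degree_eq_natDegree hc.ne_zero]
  have hWP : ∀ v, ∃ q ∈ P, v - q ∈ W := by
    have : (⊤ : Submodule A ((Fin r → A[X]) ⧸ PA)) ≤ W.map PA.mkQ := by
      refine Submodule.le_of_le_smul_of_le_jacobson_bot (I := I) Module.Finite.fg_top hjac ?_
      rintro x -
      obtain ⟨v, rfl⟩ := PA.mkQ_surjective x
      obtain ⟨w, hw, hd⟩ := h1 v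
      obtain ⟨p, hp, j, hj, rfl⟩ := Submodule.mem_sup.mp hw
      have e1 : PA.mkQ v = PA.mkQ (v - (p + j)) + PA.mkQ j := by
        have : PA.mkQ p = 0 := by simpa [PA] using hp
        rw [map_sub, map_add, this]; abel
      rw [e1]
      refine Submodule.add_mem_sup (Submodule.mem_map_of_mem ((memW _).mpr hd)) ?_
      have hj' : j ∈ I • (⊤ : Submodule A (Fin r → A[X])) := by
        refine mem_smul_top I j fun i k => ?_
        rw [Submodule.mem_pi] at hj
        exact Ideal.mem_map_C_iff.mp (hj i trivial) k
      have := Submodule.mem_map_of_mem (f := PA.mkQ) hj'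
      rw [Submodule.map_smul''] at this
      exact Submodule.smul_mono le_rfl le_top this
    intro v
    obtain ⟨w, hw, hwv⟩ := this (x := PA.mkQ v) trivial
    refine ⟨v - w, ?_, by simpa using hw⟩
    have : PA.mkQ (v - w) = 0 := by rw [map_sub, hwv, sub_self]
    rw [Submodule.mkQ_apply, Submodule.Quotient.mk_eq_zero] at this
    exact this
  choose q hqP hqW using fun l : Fin r => hWP (Pi.single l (X ^ κ l))
  refine ⟨q, ?_⟩
  let G := Submodule.span A[X] (Set.range q)
  let GA := G.restrictScalars A
  have hGP : G ≤ P := Submodule.span_le.mpr (by rintro _ ⟨l, rfl⟩; exact hqP l)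
  have hqG : ∀ l, q l ∈ G := fun l => Submodule.subset_span ⟨l, rfl⟩
  have hk : ∀ l, (Pi.single l (X ^ κ l) : Fin r → A[X]) ∈ W ⊔ GA := fun l => by
    have := Submodule.add_mem_sup (hqW l) (show q l ∈ GA from hqG l)
    simpa using this
  have hXW : ∀ w ∈ W, (X : A[X]) • w ∈ W ⊔ GA := by
    intro w hw
    rw [memW] at hw
    let s : Fin r → A[X] := ∑ i, (X * w i).coeff (κ i) • Pi.single i (X ^ κ i)
    have hs : s ∈ W ⊔ GA := Submodule.sum_mem _ fun i _ => Submodule.smul_mem _ _ (hk i)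
    have hsi : ∀ i, s i = (X * w i).coeff (κ i) • X ^ κ i := by
      intro i
      simp only [s, Finset.sum_apply, Pi.smul_apply]
      rw [Finset.sum_eq_single i]
      · simp
      · intro j _ hj
        rw [Pi.single_eq_of_ne (Ne.symm hj), smul_zero]
      · simp
    have : (X : A[X]) • w - s ∈ W := by
      rw [memW]
      intro i
      rw [degree_lt_iff_coeff_zero]
      intro k hk
      rw [Pi.sub_apply, hsi, Pi.smul_apply, smul_eq_mul, coeff_sub, coeff_smul, coeff_X_pow]
      rcases eq_or_lt_of_le hk with h | h
      · subst h; simp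
      · rw [if_neg h.ne']
        obtain ⟨k, rfl⟩ : ∃ k', k = k' + 1 := ⟨k - 1, by omega⟩
        rw [coeff_X_mul, (degree_lt_iff_coeff_zero _ _).mp (hw i) k (by omega)]
        simp
    have h3 := Submodule.add_mem _ (Submodule.mem_sup_left (T := GA) this) hs
    simpa using h3
  have hX : ∀ z ∈ W ⊔ GA, (X : A[X]) • z ∈ W ⊔ GA := by
    intro z hz
    obtain ⟨w, hw, g, hg, rfl⟩ := Submodule.mem_sup.mp hz
    rw [smul_add]
    exact Submodule.add_mem _ (hXW w hw) (Submodule.mem_sup_right (G.smul_mem X hg))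
  have hXk : ∀ i k, (Pi.single i (X ^ k) : Fin r → A[X]) ∈ W ⊔ GA := by
    intro i k
    have hlt : ∀ k, k < κ i → (Pi.single i (X ^ k) : Fin r → A[X]) ∈ W ⊔ GA := by
      intro k hk
      refine Submodule.mem_sup_left ((memW _).mpr fun j => ?_)
      by_cases hj : j = i
      · subst hj
        rw [Pi.single_eq_same]
        exact (degree_X_pow_le k).trans_lt (by exact_mod_cast hk)
      · rw [Pi.single_eq_of_ne hj, degree_zero]
        exact WithBot.bot_lt_coe _
    induction k with
    | zero =>
      rcases Nat.eq_zero_or_pos (κ i) with h | h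
      · simpa [h] using hk i
      · exact hlt 0 h
    | succ k ih =>
      have := hX _ ih
      rw [← Pi.single_smul, smul_eq_mul, ← pow_succ'] at this
      exact this
  have hWG : W ⊔ GA = ⊤ := by
    rw [eq_top_iff]
    rintro v -
    have := mem_smul_top (⊤ : Ideal A) v (fun _ _ => trivial)
    have e2 : v = ∑ i, ∑ k ∈ (v i).support, (v i).coeff k • (Pi.single i (X ^ k) : Fin r → A[X]) := by
      conv_lhs => rw [← Finset.univ_sum_single v]
      refine Finset.sum_congr rfl fun i _ => ?_
      conv_lhs => rw [(v i).as_sum_support_C_mul_X_pow]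
      have := map_sum (LinearMap.single A (fun _ : Fin r => A[X]) i)
        (fun k => C ((v i).coeff k) * X ^ k) (v i).support
      simp only [LinearMap.coe_single] at this
      rw [this]
      refine Finset.sum_congr rfl fun k _ => ?_
      rw [← smul_eq_C_mul, Pi.single_smul]
    rw [e2]
    exact Submodule.sum_mem _ fun i _ => Submodule.sum_mem _ fun k _ =>
      Submodule.smul_mem _ _ (hXk i k)
  have hWG' : ∀ v, ∃ g ∈ G, v - g ∈ W := fun v => by
    obtain ⟨w, hw, g, hg, rfl⟩ := Submodule.mem_sup.mp (hWG ▸ Submodule.mem_top : v ∈ W ⊔ GA)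
    exact ⟨g, hg, by simpa using hw⟩
  have fin2 : Module.Finite A ((Fin r → A[X]) ⧸ GA) := by
    refine finite_quot κ GA fun v => ?_
    obtain ⟨g, hg, hw⟩ := hWG' v
    exact ⟨g, hg, (memW _).mp hw⟩
  have hbot : PA.map GA.mkQ = ⊥ := by
    refine Submodule.eq_bot_of_le_smul_of_le_jacobson_bot I _ (IsNoetherian.noetherian _) ?_ hjac
    rintro _ ⟨p, hp, rfl⟩
    obtain ⟨g, hg, hw⟩ := hWG' p
    have hmem : p - g ∈ P := P.sub_mem hp (hGP hg)
    have h3 := hPm _ hmem (h2 _ (Submodule.mem_sup_left hmem) ((memW _).mp hw))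
    have h4 := Submodule.mem_map_of_mem (f := GA.mkQ) h3
    rw [Submodule.map_smul''] at h4
    have h5 : GA.mkQ g = 0 := by simpa [GA] using hg
    rw [map_sub, h5, sub_zero] at h4
    exact h4
  refine le_antisymm hGP fun p hp => ?_
  have : GA.mkQ p = 0 := by
    have := Submodule.mem_map_of_mem (f := GA.mkQ) (show p ∈ PA from hp)
    rwa [hbot, Submodule.mem_bot] at this
  simpa [GA] using this

/-- Local Horrocks theorem in matrix form. -/
lemma horrocks {A : Type} [CommRing A] [IsDomain A] [IsLocalRing A] [IsNoetherianRing A] {n r : ℕ}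
    (e : Matrix (Fin n) (Fin n) A[X]) (α : Matrix (Fin n) (Fin r) A[X])
    (β : Matrix (Fin r) (Fin n) A[X]) (c : A[X]) (hc : c.Monic) (he : e * e = e)
    (hαβ : α * β = c • e) (hβα : β * α = c • 1) (hβe : β * e = β) :
    ∃ (x : Matrix (Fin n) (Fin r) A[X]) (y : Matrix (Fin r) (Fin n) A[X]),
      x * y = e ∧ y * x = 1 := by
  classical
  let I := IsLocalRing.maximalIdeal A
  let J : Ideal A[X] := I.map C
  have hJ : J.IsPrime := Ideal.isPrime_map_C_of_isPrime
  have hcJ : c ∉ J := fun h => by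
    have := Ideal.mem_map_C_iff.mp h c.natDegree
    rw [coeff_natDegree, hc.leadingCoeff] at this
    exact (Ideal.ne_top_iff_one I).mp (IsLocalRing.maximalIdeal.isMaximal A).ne_top this
  let P := LinearMap.range β.mulVecLin
  have hcP : ∀ v : Fin r → A[X], c • v ∈ P := fun v => by
    refine ⟨α.mulVec v, ?_⟩
    rw [Matrix.mulVecLin_apply, Matrix.mulVec_mulVec, hβα, Matrix.smul_mulVec, Matrix.one_mulVec]
  obtain ⟨q, hq⟩ := horrocks_gen P c hc hcP (by
    rintro _ ⟨z, rfl⟩ hv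
    have hv' : ∀ i, β.mulVec z i ∈ J := fun i => Ideal.mem_map_C_iff.mpr (hv i)
    have h1 : ∀ i, e.mulVec z i ∈ J := by
      intro i
      have h2 : α.mulVec (β.mulVec z) = c • e.mulVec z := by
        rw [Matrix.mulVec_mulVec, hαβ, Matrix.smul_mulVec]
      have h3 : c * e.mulVec z i ∈ J := by
        have : c * e.mulVec z i = α.mulVec (β.mulVec z) i := by rw [h2]; rfl
        rw [this]
        exact J.sum_mem (t := Finset.univ) (f := fun j => α i j * β.mulVec z j)
          fun j _ => J.mul_mem_left _ (hv' j)
      exact (hJ.mem_or_mem h3).resolve_left hcJ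
    have h4 : e.mulVec z ∈ I • (⊤ : Submodule A (Fin n → A[X])) :=
      mem_smul_top I _ fun i => Ideal.mem_map_C_iff.mp (h1 i)
    have h5 := Submodule.mem_map_of_mem (f := β.mulVecLin.restrictScalars A) h4
    rw [Submodule.map_smul''] at h5
    have h6 : (β.mulVecLin.restrictScalars A) (e.mulVec z) = β.mulVecLin z := by
      simp [Matrix.mulVec_mulVec, hβe]
    rw [h6] at h5
    refine Submodule.smul_mono le_rfl ?_ h5
    rintro _ ⟨w, -, rfl⟩
    exact ⟨w, rfl⟩)
  let M : Matrix (Fin r) (Fin r) A[X] := Matrix.of fun i l => q l i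
  have hM : LinearMap.range M.mulVecLin = P := by
    rw [Matrix.range_mulVecLin, ← hq]
    rfl
  -- columns
  have hlift : ∀ {a b d : ℕ} (U : Matrix (Fin a) (Fin b) A[X]) (V : Matrix (Fin a) (Fin d) A[X]),
      (∀ j, V.col j ∈ LinearMap.range U.mulVecLin) →
      ∃ Z : Matrix (Fin b) (Fin d) A[X], U * Z = V := by
    intro a b d U V h
    choose z hz using h
    refine ⟨Matrix.of fun i j => z j i, ?_⟩
    ext1 i j
    exact congrFun (hz j) i
  obtain ⟨y, hy⟩ := hlift M β (fun j => by
    rw [hM]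
    exact ⟨Pi.single j 1, by simp⟩)
  obtain ⟨x', hx'⟩ := hlift β M (fun j => by
    change _ ∈ P
    rw [← hM]
    exact ⟨Pi.single j 1, by simp⟩)
  obtain ⟨ψ, hψ⟩ := hlift M (c • (1 : Matrix (Fin r) (Fin r) A[X])) (fun j => by
    rw [hM]
    exact hcP _)
  have hdet : M.det ≠ 0 := by
    intro h
    have := congrArg Matrix.det hψ
    rw [Matrix.det_mul, h, zero_mul, Matrix.det_smul, Matrix.det_one, mul_one] at this
    exact pow_ne_zero _ hc.ne_zero this.symm
  have hcancel : ∀ (Z Z' : Matrix (Fin r) (Fin r) A[X]), M * Z = M * Z' → Z = Z' := by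
    intro Z Z' h
    have h1 := congrArg (fun N => M.adjugate * N) h
    simp only [← Matrix.mul_assoc, Matrix.adjugate_mul, Matrix.smul_mul, Matrix.one_mul] at h1
    ext1 i j
    have := congrFun (congrFun h1 i) j
    exact mul_left_cancel₀ hdet this
  have hex : e * (e * x') = e * x' := by rw [← Matrix.mul_assoc, he]
  refine ⟨e * x', y, ?_, ?_⟩
  · have h1 : β * (e * x' * y) = β := by
      rw [← Matrix.mul_assoc, ← Matrix.mul_assoc, hβe, hx', hy]
    have h2 : α * (β * (e * x' * y)) = c • (e * x' * y) := by
      rw [← Matrix.mul_assoc, hαβ, Matrix.smul_mul, ← Matrix.mul_assoc, hex]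
    rw [h1, hαβ] at h2
    ext1 i j
    have := congrFun (congrFun h2 i) j
    exact (mul_left_cancel₀ hc.ne_zero this).symm
  · apply hcancel
    rw [← Matrix.mul_assoc, hy, ← Matrix.mul_assoc, hβe, hx', Matrix.mul_one]

end loc
end QS

namespace QS
section final
open Polynomial

/-- The affine Horrocks theorem in matrix form. -/
lemma affine_horrocks {A : Type} [CommRing A] [IsDomain A] [IsNoetherianRing A] (hA : PF A)
    {n r : ℕ} (e : Matrix (Fin n) (Fin n) A[X]) (α : Matrix (Fin n) (Fin r) A[X])
    (β : Matrix (Fin r) (Fin n) A[X]) (c : A[X]) (hc : c.Monic) (he : e * e = e)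
    (hαβ : α * β = c • e) (hβα : β * α = c • 1) (hβe : β * e = β) : Std e := by
  have hpatch : MvN e ((e.map (evalRingHom 0)).map C) := by
    refine patch e he fun m _ => ⟨r, ?_⟩
    let L := Localization.AtPrime m
    have : IsDomain L := IsLocalization.isDomain_localization m.primeCompl_le_nonZeroDivisors
    have : IsNoetherianRing L := IsLocalization.isNoetherianRing m.primeCompl L inferInstance
    let φ : A[X] →+* L[X] := mapRingHom (algebraMap A L)
    have smap : ∀ {p q : ℕ} (M : Matrix (Fin p) (Fin q) A[X]), (c • M).map φ = φ c • M.map φ :=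
      fun M => by ext1 i j; simp
    exact horrocks (e.map φ) (α.map φ) (β.map φ) (φ c) (hc.map _) (by rw [← Matrix.map_mul, he])
      (by rw [← Matrix.map_mul, hαβ, smap])
      (by rw [← Matrix.map_mul, hβα, smap, Matrix.map_one _ (map_zero _) (map_one _)])
      (by rw [← Matrix.map_mul, hβe])
  obtain ⟨k, x, y, hxy, hyx⟩ := hA n (e.map (evalRingHom 0)) (by rw [← Matrix.map_mul, he])
  obtain ⟨x', y', hxy', hyx'⟩ := hpatch
  rw [← hxy, Matrix.map_mul] at hyx'
  have h1 : y.map C * x.map C = (1 : Matrix (Fin k) (Fin k) A[X]) := by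
    rw [← Matrix.map_mul, hyx, Matrix.map_one _ (map_zero _) (map_one _)]
  refine ⟨k, x' * x.map C, y.map C * y', ?_, ?_⟩
  · calc x' * x.map C * (y.map C * y') = x' * (x.map C * y.map C) * y' := by
          simp only [Matrix.mul_assoc]
      _ = (x' * y') * (x' * y') := by rw [← hyx']; simp only [Matrix.mul_assoc]
      _ = e := by rw [hxy', he]
  · calc y.map C * y' * (x' * x.map C) = y.map C * (y' * x') * x.map C := by
          simp only [Matrix.mul_assoc]
      _ = (y.map C * x.map C) * (y.map C * x.map C) := by
          rw [hyx']; simp only [Matrix.mul_assoc]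
      _ = 1 := by rw [h1, Matrix.one_mul]

lemma Std.of_ringEquiv {R S : Type*} [CommRing R] [CommRing S] (φ : R ≃+* S) {n : ℕ}
    {e : Matrix (Fin n) (Fin n) R} (h : Std (e.map φ)) : Std e := by
  obtain ⟨r, x, y, hxy, hyx⟩ := h
  refine ⟨r, x.map φ.symm, y.map φ.symm, ?_, ?_⟩
  · rw [← Matrix.map_mul, hxy, Matrix.map_map]; ext; simp
  · rw [← Matrix.map_mul, hyx, Matrix.map_one _ (map_zero _) (map_one _)]

lemma pf_mvPolynomial (F : Type) [Field F] (n : ℕ) : PF (MvPolynomial (Fin n) F) := by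
  induction n with
  | zero => exact PF.of_ringEquiv (MvPolynomial.isEmptyRingEquiv F (Fin 0)) (pf_field F)
  | succ n ih =>
    intro k e he
    obtain ⟨r, α, β, c, hc, hαβ, hβα, hβe⟩ := generic e he
    let φ : MvPolynomial (Fin (n + 1)) F ≃+* (MvPolynomial (Fin n) F)[X] :=
      (T c).toRingEquiv.trans (MvPolynomial.finSuccEquiv F n).toRingEquiv
    have hu : IsUnit (φ c).leadingCoeff := T_leadingcoeff_isUnit c hc
    obtain ⟨a, ha⟩ := hu.exists_left_inv
    have hmonic : (C a * φ c).Monic := by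
      refine monic_of_natDegree_le_of_coeff_eq_one (φ c).natDegree (natDegree_C_mul_le _ _) ?_
      · rw [coeff_C_mul, coeff_natDegree, ha]
    have smap : ∀ {p q : ℕ} (M : Matrix (Fin p) (Fin q) (MvPolynomial (Fin (n + 1)) F)),
      (c • M).map φ = φ c • M.map φ := fun M => by ext1 i j; simp
    refine Std.of_ringEquiv φ (affine_horrocks ih (e.map φ) (C a • α.map φ) (β.map φ) (C a * φ c)
      hmonic (by rw [← Matrix.map_mul, he]) ?_ ?_ (by rw [← Matrix.map_mul, hβe]))
    · rw [Matrix.smul_mul, ← Matrix.map_mul, hαβ, smap, smul_smul]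
    · rw [Matrix.mul_smul, ← Matrix.map_mul, hβα, smap, smul_smul,
        Matrix.map_one _ (map_zero _) (map_one _)]

end final
end QS


/-- The Quillen–Suslin theorem: the polynomial ring in finitely many variables
over a field is projective free. -/
theorem stmt4 (F : Type) [Field F] (n : ℕ) :
    IsProjectiveFree (MvPolynomial (Fin n) F) := by
  exact QS.PF.isProjectiveFree (QS.pf_mvPolynomial F n)
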